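/- For every 2-multivector Q ∈ Λ²(ℝ⁷): (Q⌟⋆φ₀)∧(Q⌟φ₀)∧⋆φ₀ = 2|Q⌟φ₀|² vol, where vol = e¹∧⋯∧e⁷ is the standard volume form and |·| is the Euclidean norm on 1-forms. (Pointwise, the same identity (Q⌟⋆φ)∧(Q⌟φ)∧⋆φ = 2|Q⌟φ|²_φ Vol_φ holds for any 2-multivector field Q on a manifold with G₂-structure φ.) -/

import Mathlib

/-!
STATEMENT 17: For every 2-multivector `Q ∈ Λ²(ℝ⁷)`:
`(Q ⌟ ⋆φ₀) ∧ (Q ⌟ φ₀) ∧ ⋆φ₀ = 2 |Q ⌟ φ₀|² vol`,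
where `vol = e¹ ∧ ⋯ ∧ e⁷` and `|·|` is the Euclidean norm on 1-forms.

A 2-multivector `Q = Σ_{i<j} a i j • eᵢ ∧ eⱼ` is represented by its antisymmetric
coefficient matrix `a`; contraction is `(v₁ ∧ v₂) ⌟ α = v₂ ⌟ v₁ ⌟ α`, extended linearly.
Since a 7-form on `ℝ⁷` is determined by its value on `(e₁, …, e₇)` and
`vol (e₁, …, e₇) = 1`, the identity of 7-forms is expressed by evaluating both sides on the
standard basis; the wedge product `(β ∧ γ ∧ δ) (e₁, …, e₇)` of a 2-form `β`, a 1-form `γ`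
and a 4-form `δ` is given by the standard alternation sum
`(1/(2!·1!·4!)) Σ_{σ ∈ S₇} sgn σ · β(e_{σ1}, e_{σ2}) · γ(e_{σ3}) · δ(e_{σ4}, …, e_{σ7})`.
-/

noncomputable section

open scoped BigOperators Matrix

/-- `ℝ⁷`. -/
abbrev V7 : Type := Fin 7 → ℝ

/-- The basis exterior `k`-form `e^{i₁ ⋯ i_k}` on `ℝ⁷`. -/
def eForm {k : ℕ} (idx : Fin k → Fin 7) : AlternatingMap ℝ V7 ℝ (Fin k) :=
  (Matrix.detRowAlternating (R := ℝ) (n := Fin k)).compLinearMap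
    (LinearMap.pi fun t => LinearMap.proj (idx t))

/-- The standard `G₂` 3-form `φ₀` (0-based indices). -/
def phi0 : AlternatingMap ℝ V7 ℝ (Fin 3) :=
  eForm ![0, 1, 2] + eForm ![0, 3, 4] + eForm ![0, 5, 6] + eForm ![1, 3, 5]
    - eForm ![1, 4, 6] - eForm ![2, 3, 6] - eForm ![2, 4, 5]

/-- The Hodge dual 4-form `⋆φ₀` (0-based indices). -/
def psi0 : AlternatingMap ℝ V7 ℝ (Fin 4) :=
  eForm ![3, 4, 5, 6] + eForm ![1, 2, 5, 6] + eForm ![1, 2, 3, 4] + eForm ![0, 2, 4, 6]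
    - eForm ![0, 2, 3, 5] - eForm ![0, 1, 4, 5] - eForm ![0, 1, 3, 6]

/-- The `i`-th standard basis vector of `ℝ⁷`. -/
def e7 (i : Fin 7) : V7 := Pi.single i 1

/-- Contraction `Q ⌟ α` of an `(l+2)`-form `α` by the 2-multivector
`Q = Σ_{i<j} a i j • eᵢ ∧ eⱼ` with antisymmetric coefficient matrix `a`;
here `(X ∧ Y) ⌟ α = Y ⌟ X ⌟ α = α (X, Y, ·, …, ·)`. -/
def contr2 {l : ℕ} (a : Matrix (Fin 7) (Fin 7) ℝ) (α : AlternatingMap ℝ V7 ℝ (Fin (l + 2))) :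
    AlternatingMap ℝ V7 ℝ (Fin l) :=
  (1 / 2 : ℝ) • ∑ i : Fin 7, ∑ j : Fin 7, a i j • ((α.curryLeft (e7 i)).curryLeft (e7 j))

/-- The value `(β ∧ γ ∧ δ) (e₁, …, e₇)` of the wedge product of a 2-form `β`, a 1-form `γ`
and a 4-form `δ` on the standard basis of `ℝ⁷`. -/
def wedgeEval214 (β : AlternatingMap ℝ V7 ℝ (Fin 2)) (γ : AlternatingMap ℝ V7 ℝ (Fin 1))
    (δ : AlternatingMap ℝ V7 ℝ (Fin 4)) : ℝ :=
  (1 / 48 : ℝ) * ∑ σ : Equiv.Perm (Fin 7), ((Equiv.Perm.sign σ : ℤ) : ℝ) *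
    (β ![e7 (σ 0), e7 (σ 1)]) * (γ ![e7 (σ 2)]) *
    (δ ![e7 (σ 3), e7 (σ 4), e7 (σ 5), e7 (σ 6)])

/-!
Write `ψ₀ = ⋆φ₀`. Hodge duality turns wedging with `ψ₀` into contraction with `φ₀`:
`β ∧ γ ∧ ψ₀ = ⟨β♯ ⌟ φ₀, γ⟩ vol` for every 2-form `β` and 1-form `γ`. For `β = Q ⌟ ψ₀` and
`γ = Q ⌟ φ₀` the claim becomes `(Q ⌟ ψ₀)♯ ⌟ φ₀ = 2 Q ⌟ φ₀`.
-/

section PermSums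

variable {ι α : Type*} [Fintype ι] [Fintype α] [DecidableEq α]

theorem card_perm_extending {f g : ι → α} (hf : f.Injective) (hg : g.Injective) :
    Fintype.card {σ : Equiv.Perm α // σ ∘ f = g} =
      (Fintype.card α - Fintype.card ι).factorial := by
  obtain ⟨τ, hτ⟩ := Equiv.Perm.exists_extending_pair f g hf hg
  let toFixing : {σ : Equiv.Perm α // σ ∘ f = g} ≃
      {ρ : Equiv.Perm α // ∀ a, ¬ a ∉ Set.range f → ρ a = a} :=
    (Equiv.mulLeft τ⁻¹).subtypeEquiv fun σ => by
      simp [funext_iff, Equiv.symm_apply_eq, hτ]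
  classical
  rw [Fintype.card_congr (toFixing.trans (Equiv.Perm.subtypeEquivSubtypePerm _).symm),
    Fintype.card_perm, Fintype.card_subtype_compl, ← Set.card_range_of_injective hf]

theorem sum_perm_comp [DecidableEq ι] {M : Type*} [AddCommMonoid M] {f : ι → α} (hf : f.Injective)
    (F : (ι → α) → M) (hF : ∀ g, ¬ g.Injective → F g = 0) :
    ∑ σ : Equiv.Perm α, F (σ ∘ f) =
      (Fintype.card α - Fintype.card ι).factorial • ∑ g, F g := by
  classical
  rw [← Finset.sum_fiberwise Finset.univ (fun σ : Equiv.Perm α => σ ∘ f), Finset.smul_sum]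
  refine Finset.sum_congr rfl fun g _ => ?_
  rw [Finset.sum_congr rfl fun σ hσ => congrArg F (Finset.mem_filter.mp hσ).2,
    Finset.sum_const, ← Fintype.card_subtype]
  by_cases hg : g.Injective
  · rw [card_perm_extending hf hg]
  · rw [hF g hg, smul_zero, smul_zero]

end PermSums

theorem alternatingMap_sum_apply {R M N ι κ : Type*} [Semiring R] [AddCommMonoid M] [Module R M]
    [AddCommMonoid N] [Module R N] (s : Finset κ) (f : κ → M [⋀^ι]→ₗ[R] N) (v : ι → M) :
    (∑ k ∈ s, f k) v = ∑ k ∈ s, f k v :=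
  map_sum ({ toFun := (· v), map_zero' := rfl, map_add' := fun _ _ => rfl } :
    M [⋀^ι]→ₗ[R] N →+ N) f s

theorem sum_fin_three_arrow {α M : Type*} [Fintype α] [AddCommMonoid M] (F : (Fin 3 → α) → M) :
    ∑ g, F g = ∑ i, ∑ j, ∑ k, F ![i, j, k] := by
  have sum_cons : ∀ {n : ℕ} (G : (Fin (n + 1) → α) → M),
      ∑ g, G g = ∑ i, ∑ g, G (Matrix.vecCons i g) := fun {n} G => by
    rw [← (Fin.consEquiv fun _ : Fin (n + 1) => α).sum_comp, Fintype.sum_prod_type]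
    rfl
  simp only [sum_cons, Fintype.sum_unique, Matrix.empty_eq]

/-- Jacobi's complementary minor formula for an orthogonal matrix. -/
theorem det_toBlocks₁₁_of_mul_transpose_eq_one {m n R : Type*} [Fintype m] [Fintype n]
    [DecidableEq m] [DecidableEq n] [CommRing R] {M : Matrix (m ⊕ n) (m ⊕ n) R}
    (hM : M * Mᵀ = 1) : M.toBlocks₁₁.det = M.det * M.toBlocks₂₂.det := by
  obtain ⟨A, B, C, D, rfl⟩ : ∃ A B C D, M = Matrix.fromBlocks A B C D :=
    ⟨_, _, _, _, M.fromBlocks_toBlocks.symm⟩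
  rw [Matrix.fromBlocks_transpose, Matrix.fromBlocks_multiply, ← Matrix.fromBlocks_one,
    Matrix.fromBlocks_inj] at hM
  have factor : Matrix.fromBlocks A B C D * Matrix.fromBlocks 1 Cᵀ 0 Dᵀ =
      Matrix.fromBlocks A 0 C 1 := by
    simp [Matrix.fromBlocks_multiply, hM.2.1, hM.2.2.2]
  simpa using (congrArg Matrix.det factor).symm

theorem eForm_apply {k : ℕ} (idx : Fin k → Fin 7) (v : Fin k → V7) :
    eForm idx v = (Matrix.of fun t s => v t (idx s)).det :=
  rfl

theorem eForm_e7 {k : ℕ} (idx J : Fin k → Fin 7) :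
    eForm idx (fun t => e7 (J t)) = ((1 : Matrix (Fin 7) (Fin 7) ℝ).submatrix J idx).det := by
  rw [eForm_apply]
  congr 1
  ext t s
  simp [e7, Matrix.one_apply, Pi.single_apply, eq_comm]

theorem eForm_inl_eq_sign_mul_eForm_inr {p q : ℕ} (e : Fin p ⊕ Fin q ≃ Fin 7)
    (σ τ : Equiv.Perm (Fin 7)) :
    eForm (fun t => τ (e (.inl t))) (fun t => e7 (σ (e (.inl t)))) =
      Equiv.Perm.sign σ * Equiv.Perm.sign τ *
        eForm (fun t => τ (e (.inr t))) (fun t => e7 (σ (e (.inr t)))) := by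
  let M : Matrix (Fin p ⊕ Fin q) (Fin p ⊕ Fin q) ℝ :=
    (((1 : Matrix (Fin 7) (Fin 7) ℝ).submatrix σ τ).submatrix e e)
  have det_M : M.det = Equiv.Perm.sign σ * Equiv.Perm.sign τ := by
    have sign_factor := Matrix.det_permute σ ((1 : Matrix (Fin 7) (Fin 7) ℝ).submatrix id τ)
    rw [Matrix.det_permute', Matrix.det_one, mul_one] at sign_factor
    rw [Matrix.det_submatrix_equiv_self, ← sign_factor]
    rfl
  have orthogonal_M : M * Mᵀ = 1 := by
    simp only [M, Matrix.transpose_submatrix, Matrix.submatrix_mul_equiv, Matrix.transpose_one,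
      mul_one, Matrix.submatrix_one_equiv]
  rw [eForm_e7, eForm_e7, ← det_M]
  exact det_toBlocks₁₁_of_mul_transpose_eq_one orthogonal_M

theorem sign_mul_eForm_of_even (σ : Equiv.Perm (Fin 7)) (x y z p q r s : Fin 7)
    (bij : Function.Bijective ![x, y, z, p, q, r, s])
    (even : Equiv.Perm.sign (Equiv.ofBijective _ bij) = 1) :
    Equiv.Perm.sign σ * eForm ![p, q, r, s] ![e7 (σ 3), e7 (σ 4), e7 (σ 5), e7 (σ 6)] =
      eForm ![x, y, z] ![e7 (σ 0), e7 (σ 1), e7 (σ 2)] := by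
  have first_three {X : Type} (f : Fin 7 → X) :
      (fun t => f (finSumFinEquiv (m := 3) (n := 4) (.inl t))) = ![f 0, f 1, f 2] := by
    funext t; fin_cases t <;> rfl
  have last_four {X : Type} (f : Fin 7 → X) :
      (fun t => f (finSumFinEquiv (m := 3) (n := 4) (.inr t))) = ![f 3, f 4, f 5, f 6] := by
    funext t; fin_cases t <;> rfl
  have duality := eForm_inl_eq_sign_mul_eForm_inr (finSumFinEquiv (m := 3) (n := 4)) σ
    (Equiv.ofBijective _ bij)
  rw [even, Units.val_one, Int.cast_one, mul_one, first_three, last_four,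
    first_three fun i => e7 (σ i), last_four fun i => e7 (σ i)] at duality
  exact duality.symm

/-- This is `ψ₀ = ⋆φ₀`, evaluated on an arbitrary reordering of the standard frame. Term by term:
each index quadruple of `ψ₀` completes the matching triple of `φ₀` to an even permutation. -/
theorem sign_mul_psi0 (σ : Equiv.Perm (Fin 7)) :
    Equiv.Perm.sign σ * psi0 ![e7 (σ 3), e7 (σ 4), e7 (σ 5), e7 (σ 6)] =
      phi0 ![e7 (σ 0), e7 (σ 1), e7 (σ 2)] := by
  have h012 := sign_mul_eForm_of_even σ 0 1 2 3 4 5 6 (by decide) (by decide)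
  have h034 := sign_mul_eForm_of_even σ 0 3 4 1 2 5 6 (by decide) (by decide)
  have h056 := sign_mul_eForm_of_even σ 0 5 6 1 2 3 4 (by decide) (by decide)
  have h135 := sign_mul_eForm_of_even σ 1 3 5 0 2 4 6 (by decide) (by decide)
  have h146 := sign_mul_eForm_of_even σ 1 4 6 0 2 3 5 (by decide) (by decide)
  have h236 := sign_mul_eForm_of_even σ 2 3 6 0 1 4 5 (by decide) (by decide)
  have h245 := sign_mul_eForm_of_even σ 2 4 5 0 1 3 6 (by decide) (by decide)
  simp only [phi0, psi0, AlternatingMap.add_apply, AlternatingMap.sub_apply]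
  linear_combination h012 + h034 + h056 + h135 - h146 - h236 - h245

section Contraction

theorem vecCons_comp_zero_succAbove {X : Type*} {n : ℕ} (x : X) (v : Fin n → X) :
    Matrix.vecCons x v ∘ (0 : Fin (n + 1)).succAbove = v := by
  funext t
  rw [Function.comp_apply, Fin.zero_succAbove, Matrix.cons_val_succ]

theorem vecCons_comp_succ_succAbove {X : Type*} {n : ℕ} (x : X) (v : Fin (n + 1) → X)
    (s : Fin (n + 1)) :
    Matrix.vecCons x v ∘ s.succ.succAbove = Matrix.vecCons x (v ∘ s.succAbove) := by
  funext t
  refine Fin.cases ?_ (fun t => ?_) t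
  · rw [Function.comp_apply, Fin.succ_succAbove_zero, Matrix.cons_val_zero, Matrix.cons_val_zero]
  · rw [Function.comp_apply, Fin.succ_succAbove_succ, Matrix.cons_val_succ, Matrix.cons_val_succ,
      Function.comp_apply]

theorem eForm_vecCons {k : ℕ} (idx : Fin (k + 1) → Fin 7) (x : V7) (v : Fin k → V7) :
    eForm idx (Matrix.vecCons x v) =
      ∑ s : Fin (k + 1), (-1) ^ (s : ℕ) * x (idx s) * eForm (idx ∘ s.succAbove) v :=
  Matrix.det_succ_row_zero _

variable {l : ℕ} (a : Matrix (Fin 7) (Fin 7) ℝ)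

theorem contr2_apply (α : AlternatingMap ℝ V7 ℝ (Fin (l + 2))) (v : Fin l → V7) :
    contr2 a α v =
      1 / 2 * ∑ i, ∑ j, a i j * α (Matrix.vecCons (e7 i) (Matrix.vecCons (e7 j) v)) := by
  simp only [contr2, AlternatingMap.smul_apply, alternatingMap_sum_apply, smul_eq_mul,
    AlternatingMap.curryLeft_apply_apply]

theorem contr2_add (α β : AlternatingMap ℝ V7 ℝ (Fin (l + 2))) :
    contr2 a (α + β) = contr2 a α + contr2 a β := by
  ext v
  simp only [contr2_apply, AlternatingMap.add_apply, mul_add, Finset.sum_add_distrib]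

theorem contr2_sub (α β : AlternatingMap ℝ V7 ℝ (Fin (l + 2))) :
    contr2 a (α - β) = contr2 a α - contr2 a β := by
  ext v
  simp only [contr2_apply, AlternatingMap.sub_apply, mul_sub, Finset.sum_sub_distrib]

theorem contr2_eForm (idx : Fin (l + 2) → Fin 7) :
    contr2 a (eForm idx) = (1 / 2 : ℝ) • ∑ s : Fin (l + 2), ∑ t : Fin (l + 1),
      ((-1) ^ (s + t : ℕ) * a (idx s) ((idx ∘ s.succAbove) t)) •
        eForm ((idx ∘ s.succAbove) ∘ t.succAbove) := by
  ext v
  simp only [contr2_apply, eForm_vecCons, AlternatingMap.smul_apply, alternatingMap_sum_apply,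
    smul_eq_mul]
  congr 1
  simp only [Finset.mul_sum]
  rw [Finset.sum_comm_cycle]
  refine Finset.sum_congr rfl fun s _ => ?_
  rw [Finset.sum_comm_cycle]
  refine Finset.sum_congr rfl fun t _ => ?_
  simp only [e7, Pi.single_apply, mul_ite, mul_one, mul_zero, ite_mul, zero_mul,
    Finset.sum_ite_eq, Finset.mem_univ, if_true]
  ring

variable {a}

theorem contr2_eForm_three (ha : aᵀ = -a) (x y z : Fin 7) :
    contr2 a (eForm ![x, y, z]) =
      a x y • eForm ![z] - a x z • eForm ![y] + a y z • eForm ![x] := by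
  have skew (i j : Fin 7) : a j i = -a i j := congrFun₂ ha i j
  simp only [contr2_eForm, Fin.sum_univ_succ, Fin.sum_univ_zero, vecCons_comp_zero_succAbove,
    vecCons_comp_succ_succAbove, Matrix.cons_val_zero, Matrix.cons_val_succ,
    Fin.val_zero, Fin.val_succ]
  rw [skew x y, skew x z, skew y z]
  module

theorem contr2_eForm_four (ha : aᵀ = -a) (x y z w : Fin 7) :
    contr2 a (eForm ![x, y, z, w]) =
      a x y • eForm ![z, w] - a x z • eForm ![y, w] + a x w • eForm ![y, z]
        + a y z • eForm ![x, w] - a y w • eForm ![x, z] + a z w • eForm ![x, y] := by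
  have skew (i j : Fin 7) : a j i = -a i j := congrFun₂ ha i j
  simp only [contr2_eForm, Fin.sum_univ_succ, Fin.sum_univ_zero, vecCons_comp_zero_succAbove,
    vecCons_comp_succ_succAbove, Matrix.cons_val_zero, Matrix.cons_val_succ,
    Fin.val_zero, Fin.val_succ]
  rw [skew x y, skew x z, skew x w, skew y z, skew y w, skew z w]
  module

theorem contr2_phi0 (ha : aᵀ = -a) :
    contr2 a phi0 =
      (a 1 2 + a 3 4 + a 5 6) • eForm ![0] + (-a 0 2 + a 3 5 - a 4 6) • eForm ![1]
      + (a 0 1 - a 3 6 - a 4 5) • eForm ![2] + (-a 0 4 - a 1 5 + a 2 6) • eForm ![3]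
      + (a 0 3 + a 1 6 + a 2 5) • eForm ![4] + (-a 0 6 + a 1 3 - a 2 4) • eForm ![5]
      + (a 0 5 - a 1 4 - a 2 3) • eForm ![6] := by
  simp only [phi0, contr2_add, contr2_sub, contr2_eForm_three ha]
  module

/-- The coefficient matrix of a `2`-form in the standard basis. As an argument of `contr2` it
encodes the `2`-multivector metrically dual to the form. -/
def formMatrix (β : AlternatingMap ℝ V7 ℝ (Fin 2)) : Matrix (Fin 7) (Fin 7) ℝ :=
  Matrix.of fun i j => β ![e7 i, e7 j]

theorem formMatrix_apply (β : AlternatingMap ℝ V7 ℝ (Fin 2)) (i j : Fin 7) :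
    formMatrix β i j = β ![e7 i, e7 j] :=
  rfl

theorem formMatrix_transpose (β : AlternatingMap ℝ V7 ℝ (Fin 2)) :
    (formMatrix β)ᵀ = -formMatrix β := by
  ext i j
  simpa [formMatrix] using β.map_swap ![e7 i, e7 j] Fin.zero_ne_one

theorem eForm_pair_e7 (p q i j : Fin 7) :
    eForm ![p, q] ![e7 i, e7 j] =
      (if p = i then 1 else 0) * (if q = j then 1 else 0)
        - (if q = i then 1 else 0) * (if p = j then 1 else 0) := by
  rw [eForm_apply, Matrix.det_fin_two]
  simp only [Matrix.of_apply, Matrix.cons_val_zero, Matrix.cons_val_one, e7, Pi.single_apply]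

/-- On 2-forms, `β ↦ β♯ ⌟ ψ₀` is `2` on `Λ²₇` and `-1` on `Λ²₁₄`, and `β ↦ β♯ ⌟ φ₀` annihilates
`Λ²₁₄`. -/
theorem contr2_contr2_psi0_phi0 (ha : aᵀ = -a) :
    contr2 (formMatrix (contr2 a psi0)) phi0 = (2 : ℝ) • contr2 a phi0 := by
  rw [contr2_phi0 ha, contr2_phi0 (formMatrix_transpose _)]
  simp only [formMatrix_apply, psi0, contr2_add, contr2_sub, contr2_eForm_four ha,
    AlternatingMap.add_apply, AlternatingMap.sub_apply, AlternatingMap.smul_apply, smul_eq_mul,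
    eForm_pair_e7, Fin.reduceEq, ↓reduceIte]
  module

end Contraction

theorem wedgeEval214_psi0 (β : AlternatingMap ℝ V7 ℝ (Fin 2)) (γ : AlternatingMap ℝ V7 ℝ (Fin 1)) :
    wedgeEval214 β γ psi0 = ∑ k, contr2 (formMatrix β) phi0 ![e7 k] * γ ![e7 k] := by
  let F (g : Fin 3 → Fin 7) : ℝ :=
    β ![e7 (g 0), e7 (g 1)] * γ ![e7 (g 2)] * phi0 ![e7 (g 0), e7 (g 1), e7 (g 2)]
  have F_of_not_injective (g : Fin 3 → Fin 7) (hg : ¬ g.Injective) : F g = 0 := by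
    have frame : ![e7 (g 0), e7 (g 1), e7 (g 2)] = e7 ∘ g := by
      funext t; fin_cases t <;> rfl
    simp only [F, frame, phi0.map_eq_zero_of_not_injective _ fun h => hg h.of_comp, mul_zero]
  have sum_perm : ∑ σ : Equiv.Perm (Fin 7), F (σ ∘ ![0, 1, 2]) = (24 : ℝ) * ∑ g, F g := by
    rw [sum_perm_comp (by decide) F F_of_not_injective, nsmul_eq_mul]
    rfl
  calc wedgeEval214 β γ psi0
      = 1 / 48 * ∑ σ : Equiv.Perm (Fin 7), F (σ ∘ ![0, 1, 2]) := by
        refine congrArg (1 / 48 * ·) (Finset.sum_congr rfl fun σ _ => ?_)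
        change _ = β ![e7 (σ 0), e7 (σ 1)] * γ ![e7 (σ 2)] * phi0 ![e7 (σ 0), e7 (σ 1), e7 (σ 2)]
        rw [← sign_mul_psi0]
        ring
    _ = 1 / 2 * ∑ k, ∑ i, ∑ j, F ![i, j, k] := by
        rw [sum_perm, sum_fin_three_arrow, Finset.sum_comm_cycle]
        ring
    _ = ∑ k, contr2 (formMatrix β) phi0 ![e7 k] * γ ![e7 k] := by
        simp only [contr2_apply, Finset.mul_sum, Finset.sum_mul]
        refine Finset.sum_congr rfl fun k _ => Finset.sum_congr rfl fun i _ =>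
          Finset.sum_congr rfl fun j _ => ?_
        change _ * (β ![e7 i, e7 j] * γ ![e7 k] * phi0 ![e7 i, e7 j, e7 k]) =
          _ * (β ![e7 i, e7 j] * phi0 ![e7 i, e7 j, e7 k]) * γ ![e7 k]
        ring

/-- **Karigiannis' identity** for 2-multivectors on `(ℝ⁷, φ₀)`:
`(Q ⌟ ⋆φ₀) ∧ (Q ⌟ φ₀) ∧ ⋆φ₀ = 2 |Q ⌟ φ₀|² vol`, both sides evaluated on `(e₁, …, e₇)`
(`vol (e₁, …, e₇) = 1`, and `|γ|² = Σᵢ γ(eᵢ)²` is the Euclidean norm of a 1-form). -/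
theorem contraction_wedge_identity (a : Matrix (Fin 7) (Fin 7) ℝ) (ha : aᵀ = -a) :
    wedgeEval214 (contr2 a psi0) (contr2 a phi0) psi0
      = 2 * ∑ i : Fin 7, (contr2 a phi0 ![e7 i]) ^ 2 := by
  rw [wedgeEval214_psi0, contr2_contr2_psi0_phi0 ha, Finset.mul_sum]
  refine Finset.sum_congr rfl fun i _ => ?_
  rw [AlternatingMap.smul_apply, smul_eq_mul]
  ring

end
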